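/- Conserved tensor of a spacetime-dependent field theory (Subsection 4.4, eqs. (4.23)–(4.25)): let a : (Fin D → ℝ) → ℝ be a smooth function, σ ∈ ℝ, and let φ : (Fin D → ℝ) → ℝ be a smooth field such that A := φ + a satisfies □A x + σ·A x = 0 for all x (this PDE is the Euler–Lagrange equation of the spacetime-dependent Lagrangian L = (1/2)∂^μφ∂_μφ + ∂^μa·∂_μφ − (1/2)σφ² − σaφ + const). Then for each fixed ν, the tensor K^μ_ν x := ∂^μ A x · ∂_ν A x − (1/2)·(if μ = ν then Σ_{α,β} η α β·∂_α A x·∂_β A x − σ·(A x)² else 0) is conserved: Σ_μ ∂_μ (fun y ↦ K^μ_ν y) x = 0 for all x. -/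

import Mathlib

open scoped BigOperators

noncomputable section

/-- Minkowski metric on `Fin D`. -/
def eta (D : ℕ) (μ ν : Fin D) : ℝ :=
  if μ = ν then (if (μ : ℕ) = 0 then 1 else -1) else 0

/-- Spacetime partial derivative `∂_μ F x`. -/
def pd {D : ℕ} (F : (Fin D → ℝ) → ℝ) (μ : Fin D) (x : Fin D → ℝ) : ℝ :=
  fderiv ℝ F x (Pi.single μ 1)

/-- Raised-index partial derivative `∂^μ F x`. -/
def pdu {D : ℕ} (F : (Fin D → ℝ) → ℝ) (μ : Fin D) (x : Fin D → ℝ) : ℝ :=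
  ∑ ν, eta D μ ν * pd F ν x

/-- d'Alembertian `□F x`. -/
def box {D : ℕ} (F : (Fin D → ℝ) → ℝ) (x : Fin D → ℝ) : ℝ :=
  ∑ μ, pd (fun y => pdu F μ y) μ x

/-!
Off shell, the divergence of the canonical energy–momentum tensor
`K^μ_ν = ∂^μ A ∂_ν A - δ^μ_ν L` of the Lagrangian `L = ½ g^{αβ} ∂_α A ∂_β A - V(A)` is
`(□A + V'(A)) ∂_ν A`. Indeed `∂_μ (∂^μ A ∂_ν A) = □A ∂_ν A + ∂^μ A ∂_μ ∂_ν A`, while the symmetry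
of `g` and of second derivatives gives `∂_ν L = ∂^μ A ∂_μ ∂_ν A - V'(A) ∂_ν A`. The theory of
`φ` with background `a` is the case `A = φ + a`, `V(t) = ½ σ t²`.
-/

lemma differentiableAt_fderiv_of_contDiffAt_two {𝕜 E W : Type*} [NontriviallyNormedField 𝕜]
    [NormedAddCommGroup E] [NormedSpace 𝕜 E] [NormedAddCommGroup W] [NormedSpace 𝕜 W]
    {f : E → W} {x : E} (hf : ContDiffAt 𝕜 2 f x) : DifferentiableAt 𝕜 (fderiv 𝕜 f) x :=
  (hf.fderiv_right (m := 1) (by norm_num)).differentiableAt one_ne_zero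

section PartialDerivatives

variable {D : ℕ} {F G : (Fin D → ℝ) → ℝ} {x : Fin D → ℝ}

lemma pd_sub (hF : DifferentiableAt ℝ F x) (hG : DifferentiableAt ℝ G x) (μ : Fin D) :
    pd (fun y => F y - G y) μ x = pd F μ x - pd G μ x := by
  simp [pd, fderiv_fun_sub hF hG]

lemma pd_mul (hF : DifferentiableAt ℝ F x) (hG : DifferentiableAt ℝ G x) (μ : Fin D) :
    pd (fun y => F y * G y) μ x = pd F μ x * G x + F x * pd G μ x := by
  simp only [pd, fderiv_fun_mul hF hG, add_apply, smul_apply, smul_eq_mul]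
  ring

lemma pd_const_mul (hF : DifferentiableAt ℝ F x) (c : ℝ) (μ : Fin D) :
    pd (fun y => c * F y) μ x = c * pd F μ x := by
  simp [pd, fderiv_const_mul hF]

lemma pd_sum {ι : Type*} {s : Finset ι} {H : ι → (Fin D → ℝ) → ℝ}
    (hH : ∀ i ∈ s, DifferentiableAt ℝ (H i) x) (μ : Fin D) :
    pd (fun y => ∑ i ∈ s, H i y) μ x = ∑ i ∈ s, pd (H i) μ x := by
  simp [pd, fderiv_fun_sum hH]

lemma pd_comp {V : ℝ → ℝ} {V' : ℝ} (hV : HasDerivAt V V' (F x))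
    (hF : DifferentiableAt ℝ F x) (μ : Fin D) :
    pd (fun y => V (F y)) μ x = V' * pd F μ x := by
  have hVF : HasFDerivAt (fun y => V (F y)) (V' • fderiv ℝ F x) x :=
    hV.comp_hasFDerivAt x hF.hasFDerivAt
  simp [pd, hVF.fderiv]

lemma differentiableAt_pd (hF : ContDiffAt ℝ 2 F x) (μ : Fin D) :
    DifferentiableAt ℝ (pd F μ) x :=
  (differentiableAt_fderiv_of_contDiffAt_two hF).clm_apply (differentiableAt_const _)

lemma pd_pd_eq_fderiv_fderiv (hF : ContDiffAt ℝ 2 F x) (μ ν : Fin D) :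
    pd (pd F μ) ν x = fderiv ℝ (fderiv ℝ F) x (Pi.single ν 1) (Pi.single μ 1) := by
  have hF' := differentiableAt_fderiv_of_contDiffAt_two hF
  change fderiv ℝ (fun y => fderiv ℝ F y (Pi.single μ 1)) x (Pi.single ν 1) = _
  simp [fderiv_clm_apply hF' (differentiableAt_const _)]

lemma pd_pd_comm (hF : ContDiffAt ℝ 2 F x) (μ ν : Fin D) :
    pd (pd F μ) ν x = pd (pd F ν) μ x := by
  rw [pd_pd_eq_fderiv_fderiv hF, pd_pd_eq_fderiv_fderiv hF]
  exact hF.isSymmSndFDerivAt (by simp) _ _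

end PartialDerivatives

lemma sum_sum_mul_mul_comm_of_symm {ι R : Type*} [Fintype ι] [CommSemiring R] {g : ι → ι → R}
    (hg : ∀ α β, g α β = g β α) (u v : ι → R) :
    ∑ α, (∑ β, g α β * u β) * v α = ∑ α, (∑ β, g α β * v β) * u α := by
  simp only [Finset.sum_mul]
  rw [Finset.sum_comm]
  simp only [hg, mul_right_comm]

section EnergyMomentum

variable {D : ℕ}

/-- The gradient `∂^μ F = g^{μν} ∂_ν F`, its index raised with the constant coefficients `g`;
for `g = eta D` this is `pdu`. -/
def raisedPd (g : Fin D → Fin D → ℝ) (F : (Fin D → ℝ) → ℝ) (μ : Fin D) (x : Fin D → ℝ) : ℝ :=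
  ∑ ν, g μ ν * pd F ν x

/-- The second-order operator `∂_μ ∂^μ F` of the constant coefficients `g`; for `g = eta D` this
is the d'Alembertian `box`. -/
def waveOperator (g : Fin D → Fin D → ℝ) (F : (Fin D → ℝ) → ℝ) (x : Fin D → ℝ) : ℝ :=
  ∑ μ, pd (raisedPd g F μ) μ x

/-- The Lagrangian density `½ g^{αβ} ∂_α A ∂_β A - V(A)` of a scalar field `A` with potential
`V`. -/
def scalarLagrangian (g : Fin D → Fin D → ℝ) (V : ℝ → ℝ) (A : (Fin D → ℝ) → ℝ)
    (x : Fin D → ℝ) : ℝ :=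
  1 / 2 * (∑ α, ∑ β, g α β * pd A α x * pd A β x) - V (A x)

/-- The canonical energy–momentum tensor `∂^μ A ∂_ν A - δ^μ_ν L` of a scalar field `A`, where `L`
is `scalarLagrangian g V A`; the first index is the raised one. -/
def energyMomentum (g : Fin D → Fin D → ℝ) (V : ℝ → ℝ) (A : (Fin D → ℝ) → ℝ) (μ ν : Fin D)
    (x : Fin D → ℝ) : ℝ :=
  raisedPd g A μ x * pd A ν x - if μ = ν then scalarLagrangian g V A x else 0

variable {g : Fin D → Fin D → ℝ} {V : ℝ → ℝ} {V' : ℝ} {A : (Fin D → ℝ) → ℝ} {x : Fin D → ℝ}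

lemma differentiableAt_raisedPd (hA : ContDiffAt ℝ 2 A x) (μ : Fin D) :
    DifferentiableAt ℝ (raisedPd g A μ) x :=
  DifferentiableAt.fun_sum fun ν _ => (differentiableAt_pd hA ν).const_mul (g μ ν)

lemma pd_raisedPd (hA : ContDiffAt ℝ 2 A x) (μ ν : Fin D) :
    pd (raisedPd g A μ) ν x = ∑ β, g μ β * pd (pd A β) ν x := by
  have hterm (β : Fin D) : DifferentiableAt ℝ (fun y => g μ β * pd A β y) x :=
    (differentiableAt_pd hA β).const_mul (g μ β)
  calc pd (raisedPd g A μ) ν x = ∑ β, pd (fun y => g μ β * pd A β y) ν x :=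
        pd_sum (fun β _ => hterm β) ν
    _ = ∑ β, g μ β * pd (pd A β) ν x :=
        Finset.sum_congr rfl fun β _ => pd_const_mul (differentiableAt_pd hA β) (g μ β) ν

lemma sum_sum_mul_pd_mul_pd (g : Fin D → Fin D → ℝ) (A : (Fin D → ℝ) → ℝ) (y : Fin D → ℝ) :
    ∑ α, ∑ β, g α β * pd A α y * pd A β y = ∑ α, raisedPd g A α y * pd A α y := by
  simp only [raisedPd, Finset.sum_mul, mul_right_comm]

lemma differentiableAt_sum_sum_mul_pd_mul_pd (hA : ContDiffAt ℝ 2 A x) :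
    DifferentiableAt ℝ (fun y => ∑ α, ∑ β, g α β * pd A α y * pd A β y) x := by
  simp only [sum_sum_mul_pd_mul_pd]
  exact DifferentiableAt.fun_sum fun α _ =>
    (differentiableAt_raisedPd hA α).mul (differentiableAt_pd hA α)

lemma pd_sum_sum_mul_pd_mul_pd (hg : ∀ α β, g α β = g β α) (hA : ContDiffAt ℝ 2 A x)
    (ν : Fin D) :
    pd (fun y => ∑ α, ∑ β, g α β * pd A α y * pd A β y) ν x =
      2 * ∑ α, raisedPd g A α x * pd (pd A ν) α x := by
  have hraised (α : Fin D) : DifferentiableAt ℝ (raisedPd g A α) x := differentiableAt_raisedPd hA α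
  have hpd (α : Fin D) : DifferentiableAt ℝ (pd A α) x := differentiableAt_pd hA α
  have hmove : ∑ α, pd (raisedPd g A α) ν x * pd A α x =
      ∑ α, raisedPd g A α x * pd (pd A α) ν x := by
    simp only [pd_raisedPd hA, raisedPd]
    exact sum_sum_mul_mul_comm_of_symm hg _ _
  calc pd (fun y => ∑ α, ∑ β, g α β * pd A α y * pd A β y) ν x
      = pd (fun y => ∑ α, raisedPd g A α y * pd A α y) ν x := by simp only [sum_sum_mul_pd_mul_pd]
    _ = ∑ α, (pd (raisedPd g A α) ν x * pd A α x + raisedPd g A α x * pd (pd A α) ν x) := by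
        rw [pd_sum fun α _ => (hraised α).fun_mul (hpd α)]
        exact Finset.sum_congr rfl fun α _ => pd_mul (hraised α) (hpd α) ν
    _ = 2 * ∑ α, raisedPd g A α x * pd (pd A α) ν x := by
        rw [Finset.sum_add_distrib, hmove, two_mul]
    _ = 2 * ∑ α, raisedPd g A α x * pd (pd A ν) α x := by simp only [pd_pd_comm hA _ ν]

lemma differentiableAt_scalarLagrangian (hA : ContDiffAt ℝ 2 A x)
    (hV : DifferentiableAt ℝ V (A x)) : DifferentiableAt ℝ (scalarLagrangian g V A) x :=
  ((differentiableAt_sum_sum_mul_pd_mul_pd hA).const_mul (1 / 2)).sub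
    (hV.comp x (hA.differentiableAt two_ne_zero))

lemma pd_scalarLagrangian (hg : ∀ α β, g α β = g β α) (hA : ContDiffAt ℝ 2 A x)
    (hV : HasDerivAt V V' (A x)) (ν : Fin D) :
    pd (scalarLagrangian g V A) ν x =
      ∑ μ, raisedPd g A μ x * pd (pd A ν) μ x - V' * pd A ν x := by
  have hA' : DifferentiableAt ℝ A x := hA.differentiableAt two_ne_zero
  have hkin := differentiableAt_sum_sum_mul_pd_mul_pd (g := g) hA
  have hVA : DifferentiableAt ℝ (fun y => V (A y)) x := hV.differentiableAt.comp x hA'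
  calc pd (scalarLagrangian g V A) ν x
      = pd (fun y => 1 / 2 * ∑ α, ∑ β, g α β * pd A α y * pd A β y) ν x -
          pd (fun y => V (A y)) ν x := pd_sub (hkin.const_mul (1 / 2)) hVA ν
    _ = 1 / 2 * (2 * ∑ μ, raisedPd g A μ x * pd (pd A ν) μ x) - V' * pd A ν x := by
        rw [pd_const_mul hkin, pd_sum_sum_mul_pd_mul_pd hg hA, pd_comp hV hA']
    _ = ∑ μ, raisedPd g A μ x * pd (pd A ν) μ x - V' * pd A ν x := by ring

lemma pd_energyMomentum (hA : ContDiffAt ℝ 2 A x) (hV : DifferentiableAt ℝ V (A x))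
    (μ ν : Fin D) :
    pd (energyMomentum g V A μ ν) μ x =
      pd (raisedPd g A μ) μ x * pd A ν x + raisedPd g A μ x * pd (pd A ν) μ x -
        if μ = ν then pd (scalarLagrangian g V A) μ x else 0 := by
  have hraised := differentiableAt_raisedPd (g := g) hA μ
  have hpd := differentiableAt_pd hA ν
  rw [← pd_mul hraised hpd]
  by_cases hμν : μ = ν
  · have hsplit : energyMomentum g V A μ ν =
        fun y => raisedPd g A μ y * pd A ν y - scalarLagrangian g V A y :=
      funext fun y => by simp only [energyMomentum, hμν, if_true]
    rw [hsplit, if_pos hμν,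
      pd_sub (hraised.fun_mul hpd) (differentiableAt_scalarLagrangian hA hV)]
  · have hsplit : energyMomentum g V A μ ν = fun y => raisedPd g A μ y * pd A ν y :=
      funext fun y => by simp only [energyMomentum, hμν, if_false, sub_zero]
    rw [hsplit, if_neg hμν, sub_zero]

lemma sum_pd_energyMomentum (hg : ∀ α β, g α β = g β α) (hA : ContDiffAt ℝ 2 A x)
    (hV : HasDerivAt V V' (A x)) (ν : Fin D) :
    ∑ μ, pd (energyMomentum g V A μ ν) μ x = (waveOperator g A x + V') * pd A ν x := by
  calc ∑ μ, pd (energyMomentum g V A μ ν) μ x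
      = waveOperator g A x * pd A ν x + ∑ μ, raisedPd g A μ x * pd (pd A ν) μ x -
          pd (scalarLagrangian g V A) ν x := by
        simp only [pd_energyMomentum hA hV.differentiableAt, Finset.sum_sub_distrib,
          Finset.sum_add_distrib, Finset.sum_ite_eq', Finset.mem_univ, if_true, waveOperator,
          Finset.sum_mul]
    _ = (waveOperator g A x + V') * pd A ν x := by
        rw [pd_scalarLagrangian hg hA hV]
        ring

theorem spacetime_dependent_theory_conserved_tensor_general (hg : ∀ α β, g α β = g β α)
    (hA : ContDiffAt ℝ 2 A x) (hV : HasDerivAt V V' (A x)) (hEL : waveOperator g A x + V' = 0)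
    (ν : Fin D) :
    ∑ μ, pd (energyMomentum g V A μ ν) μ x = 0 := by
  rw [sum_pd_energyMomentum hg hA hV, hEL, zero_mul]

end EnergyMomentum

lemma eta_comm (D : ℕ) (μ ν : Fin D) : eta D μ ν = eta D ν μ := by
  unfold eta
  grind

lemma hasDerivAt_quadratic (σ t : ℝ) : HasDerivAt (fun s => 1 / 2 * (σ * s ^ 2)) (σ * t) t := by
  refine (((hasDerivAt_pow 2 t).const_mul σ).const_mul (1 / 2)).congr_deriv ?_
  push_cast
  ring

lemma energyMomentum_eta_quadratic {D : ℕ} (σ : ℝ) (A : (Fin D → ℝ) → ℝ) (μ ν : Fin D) :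
    energyMomentum (eta D) (fun t => 1 / 2 * (σ * t ^ 2)) A μ ν = fun y =>
      pdu A μ y * pd A ν y - 1 / 2 * (if μ = ν then
        (∑ α, ∑ β, eta D α β * pd A α y * pd A β y) - σ * A y ^ 2 else 0) := by
  funext y
  simp only [energyMomentum, scalarLagrangian, raisedPd, pdu, mul_ite, mul_sub, mul_zero]

/-- Conserved tensor of the spacetime-dependent field theory of Subsection 4.4
(eqs. (4.23)–(4.25)). -/
theorem spacetime_dependent_theory_conserved_tensor {D : ℕ} (hD : 1 ≤ D)
    (a : (Fin D → ℝ) → ℝ) (ha : ContDiff ℝ (⊤ : ℕ∞) a) (σ : ℝ)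
    (φ : (Fin D → ℝ) → ℝ) (hφ : ContDiff ℝ (⊤ : ℕ∞) φ)
    (hEL : ∀ x, box (fun y => φ y + a y) x + σ * (φ x + a x) = 0) :
    ∀ (ν : Fin D) (x : Fin D → ℝ),
      ∑ μ, pd (fun y =>
        pdu (fun z => φ z + a z) μ y * pd (fun z => φ z + a z) ν y -
          (1/2) * (if μ = ν then
            (∑ α, ∑ β, eta D α β * pd (fun z => φ z + a z) α y * pd (fun z => φ z + a z) β y) -
              σ * (φ y + a y)^2
          else 0)) μ x = 0 := by
  intro ν x
  have hA : ContDiff ℝ 2 (fun y => φ y + a y) := contDiff_infty.1 (hφ.add ha) 2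
  simpa only [energyMomentum_eta_quadratic] using
    spacetime_dependent_theory_conserved_tensor_general (eta_comm D) hA.contDiffAt
      (hasDerivAt_quadratic σ _) (hEL x) ν

end
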